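/- Let Φ ∈ ℝ^{m×n} have restricted isometry constant δ_{K+1} < 1 of order K+1, let x ∈ ℝ^n be K-sparse with support T, |T| = K with K + 1 ≤ n, and let y = Φx + v. Then for every index i ∈ {1,…,n} with i ∉ T, one has |⟨φ_i, y⟩| ≤ δ_{K+1}·‖x‖₂ + √(1 + δ_1)·‖v‖₂, where δ_1 is the restricted isometry constant of order 1. -/

import Mathlib

noncomputable section
open Finset

/-- `Vec n` is `ℝ^n` with the Euclidean (ℓ²) norm. -/
abbrev Vec (n : ℕ) := EuclideanSpace ℝ (Fin n)

/-- The standard inner product `⟨u, v⟩ = ∑ i, u i * v i`. -/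
def dot {n : ℕ} (u v : Vec n) : ℝ := ∑ i, u i * v i

/-- The `j`-th column of a matrix, as a Euclidean vector. -/
def col {m n : ℕ} (Φ : Matrix (Fin m) (Fin n) ℝ) (j : Fin n) : Vec m :=
  WithLp.toLp 2 fun i => Φ i j

/-- Matrix-vector multiplication `Φ x`, valued in Euclidean space. -/
def mulVec' {m n : ℕ} (Φ : Matrix (Fin m) (Fin n) ℝ) (x : Vec n) : Vec m :=
  WithLp.toLp 2 fun i => ∑ j, Φ i j * x j

/-- The support of a vector, as a `Finset`. -/
def suppF {n : ℕ} (x : Vec n) : Finset (Fin n) :=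
  Finset.univ.filter fun i => x i ≠ 0

/-- Restriction of a vector to an index set (zero outside the set). -/
def restrict {n : ℕ} (x : Vec n) (S : Finset (Fin n)) : Vec n :=
  WithLp.toLp 2 fun i => if i ∈ S then x i else 0

/-- `RIPConst Φ L δ` : δ is the restricted isometry constant of `Φ` of order `L`,
i.e. the smallest `c ≥ 0` such that `(1-c)‖u‖² ≤ ‖Φu‖² ≤ (1+c)‖u‖²` for all
`L`-sparse `u`. -/
def RIPConst {m n : ℕ} (Φ : Matrix (Fin m) (Fin n) ℝ) (L : ℕ) (δ : ℝ) : Prop :=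
  IsLeast {c : ℝ | 0 ≤ c ∧ ∀ u : Vec n, (suppF u).card ≤ L →
    (1 - c) * ‖u‖ ^ 2 ≤ ‖mulVec' Φ u‖ ^ 2 ∧ ‖mulVec' Φ u‖ ^ 2 ≤ (1 + c) * ‖u‖ ^ 2} δ

/-- Signal-to-noise ratio `‖Φx‖²/‖v‖²`. -/
def SNR {m n : ℕ} (Φ : Matrix (Fin m) (Fin n) ℝ) (x : Vec n) (v : Vec m) : ℝ :=
  ‖mulVec' Φ x‖ ^ 2 / ‖v‖ ^ 2

/-- A run of `N` iterations of Orthogonal Matching Pursuit on data `(Φ, y)`: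
`idx (k+1) = t^{k+1}` is the index selected at iteration `k+1`, `sets k = T^k`,
`est k = x^k` and `res k = r^k`. -/
structure OMPRun {m n : ℕ} (Φ : Matrix (Fin m) (Fin n) ℝ) (y : Vec m) (N : ℕ) where
  idx : ℕ → Fin n
  sets : ℕ → Finset (Fin n)
  est : ℕ → Vec n
  res : ℕ → Vec m
  sets_zero : sets 0 = ∅
  est_zero : est 0 = 0
  res_zero : res 0 = y
  idx_not_mem : ∀ k < N, idx (k + 1) ∉ sets k
  idx_max : ∀ k < N, ∀ i : Fin n, i ∉ sets k →
    |dot (col Φ i) (res k)| ≤ |dot (col Φ (idx (k + 1))) (res k)|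
  sets_succ : ∀ k < N, sets (k + 1) = insert (idx (k + 1)) (sets k)
  est_supp : ∀ k < N, suppF (est (k + 1)) ⊆ sets (k + 1)
  est_min : ∀ k < N, ∀ u : Vec n, suppF u ⊆ sets (k + 1) →
    ‖y - mulVec' Φ (est (k + 1))‖ ≤ ‖y - mulVec' Φ u‖
  res_succ : ∀ k < N, res (k + 1) = y - mulVec' Φ (est (k + 1))

/-- The vector `Φᵀ w` restricted to an index set `A` (the vector of correlations
`⟨φ_i, w⟩` for `i ∈ A`, zero outside `A`), as a Euclidean vector. -/
def colDots {m n : ℕ} (Φ : Matrix (Fin m) (Fin n) ℝ) (A : Finset (Fin n)) (w : Vec m) : Vec n :=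
  WithLp.toLp 2 fun i => if i ∈ A then dot (col Φ i) w else 0

/-- The vector `Φᵀ w` of all column correlations, as a plain function (so `‖·‖`
is the sup/ℓ∞ norm). -/
def dualVec {m n : ℕ} (Φ : Matrix (Fin m) (Fin n) ℝ) (w : Vec m) : Fin n → ℝ :=
  fun i => dot (col Φ i) w

/-- `P⊥_S w` : the projection of `w` onto the orthogonal complement of the span
of the columns of `Φ` indexed by `S`. -/
def perpProj {m n : ℕ} (Φ : Matrix (Fin m) (Fin n) ℝ) (S : Finset (Fin n)) (w : Vec m) : Vec m :=
  w - (Submodule.orthogonalProjection (Submodule.span ℝ (col Φ '' (S : Set (Fin n)))) w : Vec m)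

/-- The `j`-th largest value (1-indexed) among `{|x i| : i ∈ Γ}` (with
multiplicities); `0` if `j > |Γ|` or `j = 0`. -/
def kthLargest {n : ℕ} (x : Vec n) (Γ : Finset (Fin n)) (j : ℕ) : ℝ :=
  if 1 ≤ j ∧ j ≤ Γ.card then
    (Multiset.sort (Γ.val.map fun i => |x i|) (· ≤ ·)).getD (Γ.card - j) 0
  else 0

/-
A linear map `f` that distorts the squared norm on the plane of `u` and `w` by a factor at most `δ`
also distorts `⟪u, w⟫` by at most `δ ‖u‖ ‖w‖`: polarize `‖f z‖² - ‖z‖²` and use the parallelogram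
law. For `i` off the support of `x`, the basis vector `e_i` is orthogonal to `x` and all their
combinations are `(K+1)`-sparse, so `|⟪φ_i, Φx⟫| = |⟪Φe_i, Φx⟫| ≤ δ_{K+1} ‖x‖`. The noise term is
Cauchy–Schwarz together with `‖φ_i‖ = ‖Φe_i‖ ≤ √(1 + δ_1)`.
-/

section NearIsometry

variable {E F : Type*} [NormedAddCommGroup E] [InnerProductSpace ℝ E]
  [NormedAddCommGroup F] [InnerProductSpace ℝ F]

theorem inner_map_sub_inner_eq_polarization (f : E →ₗ[ℝ] F) (u w : E) :
    4 * (inner ℝ (f u) (f w) - inner ℝ u w) =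
      (‖f (u + w)‖ ^ 2 - ‖u + w‖ ^ 2) - (‖f (u - w)‖ ^ 2 - ‖u - w‖ ^ 2) := by
  rw [map_add, map_sub, norm_add_sq_real, norm_add_sq_real, norm_sub_sq_real, norm_sub_sq_real]
  ring

theorem abs_inner_map_sub_inner_le_of_abs_norm_sq_sub_le (f : E →ₗ[ℝ] F) {u w : E} {δ : ℝ}
    (hadd : |‖f (u + w)‖ ^ 2 - ‖u + w‖ ^ 2| ≤ δ * ‖u + w‖ ^ 2)
    (hsub : |‖f (u - w)‖ ^ 2 - ‖u - w‖ ^ 2| ≤ δ * ‖u - w‖ ^ 2) :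
    |inner ℝ (f u) (f w) - inner ℝ u w| ≤ δ * (‖u‖ ^ 2 + ‖w‖ ^ 2) / 2 := by
  have hparallelogram : ‖u + w‖ ^ 2 + ‖u - w‖ ^ 2 = 2 * (‖u‖ ^ 2 + ‖w‖ ^ 2) := by
    simpa only [sq] using parallelogram_law_with_norm ℝ u w
  have hfour : |4 * (inner ℝ (f u) (f w) - inner ℝ u w)| ≤
      4 * (δ * (‖u‖ ^ 2 + ‖w‖ ^ 2) / 2) :=
    calc |4 * (inner ℝ (f u) (f w) - inner ℝ u w)|
        ≤ |‖f (u + w)‖ ^ 2 - ‖u + w‖ ^ 2| + |‖f (u - w)‖ ^ 2 - ‖u - w‖ ^ 2| := by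
          rw [inner_map_sub_inner_eq_polarization]
          exact abs_sub _ _
      _ ≤ δ * ‖u + w‖ ^ 2 + δ * ‖u - w‖ ^ 2 := add_le_add hadd hsub
      _ = 4 * (δ * (‖u‖ ^ 2 + ‖w‖ ^ 2) / 2) := by
          rw [← mul_add, hparallelogram]
          ring
  rw [abs_mul, abs_of_pos four_pos] at hfour
  exact le_of_mul_le_mul_left hfour four_pos

theorem abs_inner_map_sub_inner_le_mul_norm_mul_norm (f : E →ₗ[ℝ] F) {u w : E} {δ : ℝ}
    (hf : ∀ a b : ℝ, |‖f (a • u + b • w)‖ ^ 2 - ‖a • u + b • w‖ ^ 2| ≤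
      δ * ‖a • u + b • w‖ ^ 2) :
    |inner ℝ (f u) (f w) - inner ℝ u w| ≤ δ * (‖u‖ * ‖w‖) := by
  rcases eq_or_ne u 0 with rfl | hu
  · simp
  rcases eq_or_ne w 0 with rfl | hw
  · simp
  have hpos : 0 < ‖u‖ * ‖w‖ := mul_pos (norm_pos_iff.mpr hu) (norm_pos_iff.mpr hw)
  -- Rescaling `u` and `w` to a common length makes the arithmetic mean a geometric one.
  have hscaled := abs_inner_map_sub_inner_le_of_abs_norm_sq_sub_le f (hf ‖w‖ ‖u‖)
    (by simpa only [neg_smul, ← sub_eq_add_neg] using hf ‖w‖ (-‖u‖))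
  have hinner : inner ℝ (f (‖w‖ • u)) (f (‖u‖ • w)) - inner ℝ (‖w‖ • u) (‖u‖ • w) =
      (‖u‖ * ‖w‖) * (inner ℝ (f u) (f w) - inner ℝ u w) := by
    simp only [map_smul, real_inner_smul_left, real_inner_smul_right]
    ring
  rw [hinner, abs_mul, abs_of_pos hpos, norm_smul, norm_smul, norm_norm, norm_norm] at hscaled
  refine le_of_mul_le_mul_left (hscaled.trans_eq ?_) hpos
  ring

end NearIsometry

section Vec

variable {m n : ℕ}

theorem dot_eq_inner (u v : Vec n) : dot u v = inner ℝ u v := by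
  simp [dot, PiLp.inner_apply, mul_comm]

theorem mulVec'_eq_toEuclideanLin (Φ : Matrix (Fin m) (Fin n) ℝ) (x : Vec n) :
    mulVec' Φ x = Matrix.toEuclideanLin Φ x :=
  rfl

theorem mulVec'_single_one (Φ : Matrix (Fin m) (Fin n) ℝ) (i : Fin n) :
    mulVec' Φ (EuclideanSpace.single i 1) = col Φ i := by
  ext k
  simp [mulVec', col]

theorem mem_suppF {x : Vec n} {i : Fin n} : i ∈ suppF x ↔ x i ≠ 0 := by
  simp [suppF]

theorem suppF_single_subset (i : Fin n) (a : ℝ) : suppF (EuclideanSpace.single i a) ⊆ {i} := by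
  intro j hj
  by_contra hji
  simp_all [mem_suppF]

theorem suppF_smul_add_smul_subset (a b : ℝ) (u w : Vec n) :
    suppF (a • u + b • w) ⊆ suppF u ∪ suppF w := by
  intro j hj
  by_contra hjuw
  simp_all [mem_suppF]

end Vec

/-- `c` is an admissible constant in the restricted isometry property of `Φ` of order `L`; the
restricted isometry constant is the smallest nonnegative one. The two-sided estimate is written
as a bound on the distortion `|‖Φu‖² - ‖u‖²|`. -/
def IsRIPBound {m n : ℕ} (Φ : Matrix (Fin m) (Fin n) ℝ) (L : ℕ) (c : ℝ) : Prop :=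
  ∀ u : Vec n, (suppF u).card ≤ L → |‖mulVec' Φ u‖ ^ 2 - ‖u‖ ^ 2| ≤ c * ‖u‖ ^ 2

theorem RIPConst.isRIPBound {m n L : ℕ} {Φ : Matrix (Fin m) (Fin n) ℝ} {δ : ℝ}
    (h : RIPConst Φ L δ) : IsRIPBound Φ L δ := by
  intro u hu
  obtain ⟨hlower, hupper⟩ := h.1.2 u hu
  rw [abs_le]
  constructor <;> linarith

namespace IsRIPBound

variable {m n L : ℕ} {Φ : Matrix (Fin m) (Fin n) ℝ} {c : ℝ}

theorem norm_mulVec'_le (h : IsRIPBound Φ L c) {u : Vec n} (hu : (suppF u).card ≤ L) :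
    ‖mulVec' Φ u‖ ≤ √(1 + c) * ‖u‖ := by
  have hsq : ‖mulVec' Φ u‖ ^ 2 ≤ (1 + c) * ‖u‖ ^ 2 := by
    linarith [(abs_le.mp (h u hu)).2]
  calc ‖mulVec' Φ u‖ ≤ √((1 + c) * ‖u‖ ^ 2) := Real.le_sqrt_of_sq_le hsq
    _ = √(1 + c) * ‖u‖ := by rw [Real.sqrt_mul' _ (sq_nonneg _), Real.sqrt_sq (norm_nonneg u)]

theorem norm_col_le (h : IsRIPBound Φ 1 c) (i : Fin n) : ‖col Φ i‖ ≤ √(1 + c) := by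
  simpa [mulVec'_single_one] using h.norm_mulVec'_le (card_le_card (suppF_single_subset i 1))

theorem abs_inner_mulVec'_sub_inner_le (h : IsRIPBound Φ L c) {u w : Vec n}
    (huw : (suppF u ∪ suppF w).card ≤ L) :
    |inner ℝ (mulVec' Φ u) (mulVec' Φ w) - inner ℝ u w| ≤ c * (‖u‖ * ‖w‖) := by
  have hcomb (a b : ℝ) : (suppF (a • u + b • w)).card ≤ L :=
    (card_le_card (suppF_smul_add_smul_subset a b u w)).trans huw
  have hplane (a b : ℝ) := h (a • u + b • w) (hcomb a b)
  simp only [mulVec'_eq_toEuclideanLin] at hplane ⊢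
  exact abs_inner_map_sub_inner_le_mul_norm_mul_norm _ hplane

theorem abs_inner_col_mulVec'_le (h : IsRIPBound Φ (L + 1) c) {x : Vec n}
    (hx : (suppF x).card ≤ L) {i : Fin n} (hi : i ∉ suppF x) :
    |inner ℝ (col Φ i) (mulVec' Φ x)| ≤ c * ‖x‖ := by
  have hxi : x i = 0 := not_not.mp (mem_suppF.not.mp hi)
  have hcard : (suppF (EuclideanSpace.single i 1) ∪ suppF x).card ≤ L + 1 :=
    calc (suppF (EuclideanSpace.single i 1) ∪ suppF x).card
        ≤ (insert i (suppF x)).card :=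
          card_le_card (union_subset_union_left (suppF_single_subset i 1))
      _ ≤ L + 1 := (card_insert_le i (suppF x)).trans (Nat.add_le_add_right hx 1)
  simpa [mulVec'_single_one, EuclideanSpace.inner_single_left, hxi] using
    h.abs_inner_mulVec'_sub_inner_le hcard

end IsRIPBound

theorem stmt13_general {m n K : ℕ} {Φ : Matrix (Fin m) (Fin n) ℝ} {δ δ' : ℝ}
    (hδ : IsRIPBound Φ (K + 1) δ) (hδ' : IsRIPBound Φ 1 δ')
    {x : Vec n} (hx : (suppF x).card ≤ K) (v : Vec m) {i : Fin n} (hi : i ∉ suppF x) :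
    |dot (col Φ i) (mulVec' Φ x + v)| ≤ δ * ‖x‖ + √(1 + δ') * ‖v‖ := by
  have hsignal : |inner ℝ (col Φ i) (mulVec' Φ x)| ≤ δ * ‖x‖ := hδ.abs_inner_col_mulVec'_le hx hi
  have hnoise : |inner ℝ (col Φ i) v| ≤ √(1 + δ') * ‖v‖ :=
    (abs_real_inner_le_norm _ _).trans (by gcongr; exact hδ'.norm_col_le i)
  rw [dot_eq_inner, inner_add_right]
  exact (abs_add_le _ _).trans (add_le_add hsignal hnoise)

/-- upper bound on off-support correlations:
`|⟨φ_i, y⟩| ≤ δ_{K+1}‖x‖ + √(1+δ₁)‖v‖` for `i ∉ T`. -/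
theorem stmt13 {m n K : ℕ} (Φ : Matrix (Fin m) (Fin n) ℝ) (δK1 δ1 : ℝ)
    (x : Vec n) (v y : Vec m) (T : Finset (Fin n))
    (hsupp : suppF x = T) (hcard : T.card = K) (hn : K + 1 ≤ n)
    (hRIP : RIPConst Φ (K + 1) δK1) (hδ : δK1 < 1) (hRIP1 : RIPConst Φ 1 δ1)
    (hy : y = mulVec' Φ x + v) :
    ∀ i : Fin n, i ∉ T →
      |dot (col Φ i) y| ≤ δK1 * ‖x‖ + Real.sqrt (1 + δ1) * ‖v‖ := by
  subst hsupp hy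
  exact fun i hi => stmt13_general hRIP.isRIPBound hRIP1.isRIPBound hcard.le v hi

end
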